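/- Let $N \ge 2$ and let $B_1^N$ be the open unit ball in $\mathbb{R}^N$. For every $u \in C_0^\infty(B_1^N)$ satisfying the spherical average zero condition $\int_{\mathbb{S}^{N-1}} u(r\omega)\,dS_\omega = 0$ for all $r \ge 0$, one has $\frac{N^2}{4} \int_{B_1^N} \frac{|u(x)|^2}{|x|^2}\,dx \le \int_{B_1^N} |\nabla u(x)|^2\,dx$. -/

import Mathlib

open MeasureTheory Metric
open scoped ENNReal

noncomputable section

/-- `u` has spherical average zero: `∫_{S^{N-1}} u(rω) dS_ω = 0` for all `r ≥ 0`. -/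
def SphereAvgZero {N : ℕ} (u : EuclideanSpace ℝ (Fin N) → ℝ) : Prop :=
  ∀ r : ℝ, 0 ≤ r →
    (∫ ω : sphere (0 : EuclideanSpace ℝ (Fin N)) 1,
      u (r • (ω : EuclideanSpace ℝ (Fin N)))
      ∂((volume : Measure (EuclideanSpace ℝ (Fin N))).toSphere)) = 0

/-! The energy `∫ ‖∇u‖²` splits into a radial and a tangential part. On each ray, the
one-dimensional Hardy inequality bounds the radial part below by `((N - 2) / 2)² ∫ u² / ‖x‖²`. On
each sphere, where `u` has mean zero, the Poincaré inequality bounds the tangential part below by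
`(N - 1) ∫ u² / ‖x‖²`, and `((N - 2) / 2)² + (N - 1) = N² / 4`.

The sharp constant `N - 1` on the sphere comes from the Gaussian Poincaré inequality applied to the
one-homogeneous extension `x ↦ ‖x‖ φ(x / ‖x‖)`: both sides then reduce to integrals over the
sphere, and linear functions are extremal for both inequalities. The Gaussian inequality in turn
follows from the invariance of a pair of independent centered Gaussian vectors `(X, Y)` under the
rotations `(cos θ X + sin θ Y, -sin θ X + cos θ Y)`: by a sharp inequality on the quarter circle,
`∫ (F² - F'²) ≤ 2 F(0) F(π / 2)` for `F θ = f (cos θ X + sin θ Y)`, and the right-hand side has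
expectation zero when `f(X)` has mean zero.
-/

section Development

open Real Set ProbabilityTheory Filter Module
open scoped RealInnerProductSpace

theorem hasDerivAt_tan_one_add_sq {x : ℝ} (hx : cos x ≠ 0) : HasDerivAt tan (1 + tan x ^ 2) x := by
  rw [← inv_inv (1 + tan x ^ 2), inv_one_add_tan_sq hx, ← one_div]
  exact hasDerivAt_tan hx

theorem integral_sq_sub_deriv_sq_le {F : ℝ → ℝ} (hF : ContDiff ℝ 1 F) :
    ∫ θ in (0)..(π / 2), (F θ ^ 2 - deriv F θ ^ 2) ≤ 2 * F 0 * F (π / 2) := by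
  -- `L` interpolates `F` at both ends of the quarter circle and solves `L'' = -L`; since `T` solves
  -- the Riccati equation `T' = 1 + T ^ 2`, the derivative of `P` is the integrand plus a square.
  let L : ℝ → ℝ := fun θ => F 0 * cos θ + F (π / 2) * sin θ
  let L' : ℝ → ℝ := fun θ => F (π / 2) * cos θ - F 0 * sin θ
  let T : ℝ → ℝ := fun θ => tan (θ - π / 4)
  let P : ℝ → ℝ := fun θ => (F θ - L θ) ^ 2 * T θ - 2 * (F θ - L θ) * L' θ - L θ * L' θ
  have hL (θ : ℝ) : HasDerivAt L (L' θ) θ :=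
    (((hasDerivAt_cos θ).const_mul _).add ((hasDerivAt_sin θ).const_mul _)).congr_deriv
      (by simp only [L']; ring)
  have hL' (θ : ℝ) : HasDerivAt L' (-L θ) θ :=
    (((hasDerivAt_cos θ).const_mul _).sub ((hasDerivAt_sin θ).const_mul _)).congr_deriv
      (by simp only [L]; ring)
  have hT (θ : ℝ) (hθ : θ ∈ Icc 0 (π / 2)) : HasDerivAt T (1 + T θ ^ 2) θ := by
    refine (hasDerivAt_tan_one_add_sq (ne_of_gt ?_)).comp_sub_const θ (π / 4)
    exact cos_pos_of_mem_Ioo ⟨by linarith [hθ.1, pi_pos], by linarith [hθ.2, pi_pos]⟩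
  have hP (θ : ℝ) (hθ : θ ∈ Icc 0 (π / 2)) :
      HasDerivAt P (F θ ^ 2 - deriv F θ ^ 2 + (deriv F θ - L' θ + T θ * (F θ - L θ)) ^ 2) θ := by
    have hG := (hF.differentiable_one θ).hasDerivAt.sub (hL θ)
    refine ((((hG.pow 2).mul (hT θ hθ)).sub ((hG.const_mul 2).mul (hL' θ))).sub
      ((hL θ).mul (hL' θ))).congr_deriv ?_
    simp only [Pi.sub_apply, Pi.pow_apply]
    ring
  have hP_sub : P (π / 2) - P 0 = 2 * F 0 * F (π / 2) := by
    simp only [P, L, L', cos_zero, sin_zero, cos_pi_div_two, sin_pi_div_two]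
    ring
  rw [← hP_sub]
  have hF' := hF.continuous_deriv_one
  refine intervalIntegral.integral_le_sub_of_hasDeriv_right_of_le (by positivity)
    (fun θ hθ => (hP θ hθ).continuousAt.continuousWithinAt)
    (fun θ hθ => (hP θ (Ioo_subset_Icc_self hθ)).hasDerivWithinAt)
    ((hF.continuous.pow 2).sub (hF'.pow 2)).continuousOn.integrableOn_Icc
    fun θ _ => le_add_of_nonneg_right (sq_nonneg _)

section Rotation

variable {E : Type*} [NormedAddCommGroup E] [NormedSpace ℝ E]

theorem hasDerivAt_fst_rotation (z : E × E) (θ : ℝ) :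
    HasDerivAt (fun θ => (ContinuousLinearMap.rotation θ z).1)
      (ContinuousLinearMap.rotation θ z).2 θ :=
  ((hasDerivAt_cos θ).smul_const z.1).add ((hasDerivAt_sin θ).smul_const z.2)

theorem continuous_rotation_uncurry :
    Continuous fun p : ℝ × E × E => ContinuousLinearMap.rotation p.1 p.2 := by
  simp only [ContinuousLinearMap.rotation_apply]
  fun_prop

variable [SecondCountableTopology E] [MeasurableSpace E] [BorelSpace E] {μ : Measure E}

theorem measurePreserving_prodMk_rotation [SFinite μ] (ν : Measure ℝ) [SFinite ν]
    (hμ : ∀ θ, (μ.prod μ).map (ContinuousLinearMap.rotation θ) = μ.prod μ) :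
    MeasurePreserving (fun p : ℝ × E × E => (p.1, ContinuousLinearMap.rotation p.1 p.2))
      (ν.prod (μ.prod μ)) (ν.prod (μ.prod μ)) :=
  (MeasurePreserving.id ν).skew_product continuous_rotation_uncurry.measurable (ae_of_all _ hμ)

variable [IsFiniteMeasure μ]

theorem integrable_comp_rotation_prod (ν : Measure ℝ) [IsFiniteMeasure ν]
    (hμ : ∀ θ, (μ.prod μ).map (ContinuousLinearMap.rotation θ) = μ.prod μ)
    {Φ : E × E → ℝ} (hΦ : Integrable Φ (μ.prod μ)) :
    Integrable (fun p : ℝ × E × E => Φ (ContinuousLinearMap.rotation p.1 p.2))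
      (ν.prod (μ.prod μ)) :=
  (measurePreserving_prodMk_rotation ν hμ).integrable_comp_of_integrable (hΦ.comp_snd ν)

theorem integrable_integral_comp_rotation (ν : Measure ℝ) [IsFiniteMeasure ν]
    (hμ : ∀ θ, (μ.prod μ).map (ContinuousLinearMap.rotation θ) = μ.prod μ)
    {Φ : E × E → ℝ} (hΦ : Integrable Φ (μ.prod μ)) :
    Integrable (fun z => ∫ θ, Φ (ContinuousLinearMap.rotation θ z) ∂ν) (μ.prod μ) :=
  (integrable_comp_rotation_prod ν hμ hΦ).integral_prod_right

theorem integral_integral_comp_rotation (ν : Measure ℝ) [IsFiniteMeasure ν]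
    (hμ : ∀ θ, (μ.prod μ).map (ContinuousLinearMap.rotation θ) = μ.prod μ)
    {Φ : E × E → ℝ} (hΦ : Integrable Φ (μ.prod μ)) :
    ∫ z, ∫ θ, Φ (ContinuousLinearMap.rotation θ z) ∂ν ∂μ.prod μ =
      ν.real univ * ∫ z, Φ z ∂μ.prod μ := by
  have hint (θ : ℝ) :
      ∫ z, Φ (ContinuousLinearMap.rotation θ z) ∂μ.prod μ = ∫ z, Φ z ∂μ.prod μ := by
    rw [← integral_map (by fun_prop) ((hμ θ).symm ▸ hΦ.1), hμ θ]
  have hΦ_rot := integrable_comp_rotation_prod ν hμ hΦ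
  rw [← integral_prod_symm _ hΦ_rot, integral_prod _ hΦ_rot]
  simp only [hint, integral_const, smul_eq_mul]

theorem integral_sq_sub_fderiv_sq_le
    (hμ : ∀ θ, (μ.prod μ).map (ContinuousLinearMap.rotation θ) = μ.prod μ)
    {f : E → ℝ} (hf : Integrable f μ)
    (hf1 : ∀ᵐ z ∂μ.prod μ, ∀ θ, ContDiffAt ℝ 1 f (ContinuousLinearMap.rotation θ z).1)
    (hΦ : Integrable (fun z => f z.1 ^ 2 - fderiv ℝ f z.1 z.2 ^ 2) (μ.prod μ)) :
    π / 2 * ∫ z, (f z.1 ^ 2 - fderiv ℝ f z.1 z.2 ^ 2) ∂μ.prod μ ≤ 2 * (∫ x, f x ∂μ) ^ 2 := by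
  let Φ : E × E → ℝ := fun z => f z.1 ^ 2 - fderiv ℝ f z.1 z.2 ^ 2
  let ν : Measure ℝ := volume.restrict (Ioc 0 (π / 2))
  have hν : ν.real univ = π / 2 := by simp [ν, pi_div_two_pos.le]
  have hcircle : ∀ᵐ z ∂μ.prod μ,
      ∫ θ, Φ (ContinuousLinearMap.rotation θ z) ∂ν ≤ 2 * (f z.1 * f z.2) := by
    filter_upwards [hf1] with z hz
    let F : ℝ → ℝ := fun θ => f (ContinuousLinearMap.rotation θ z).1
    have hF : ContDiff ℝ 1 F := contDiff_iff_contDiffAt.2 fun θ => by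
      refine (hz θ).comp θ (ContDiff.contDiffAt ?_)
      simp only [ContinuousLinearMap.rotation_apply]
      fun_prop
    have hF' (θ : ℝ) : deriv F θ = fderiv ℝ f (ContinuousLinearMap.rotation θ z).1
        (ContinuousLinearMap.rotation θ z).2 :=
      (((hz θ).differentiableAt one_ne_zero).hasFDerivAt.comp_hasDerivAt θ
        (hasDerivAt_fst_rotation z θ)).deriv
    have h := integral_sq_sub_deriv_sq_le hF
    rw [intervalIntegral.integral_of_le (by positivity), mul_assoc] at h
    simp only [hF'] at h
    simpa [F, Φ, ν, ContinuousLinearMap.rotation_apply] using h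
  calc π / 2 * ∫ z, Φ z ∂μ.prod μ
      = ∫ z, ∫ θ, Φ (ContinuousLinearMap.rotation θ z) ∂ν ∂μ.prod μ := by
        rw [integral_integral_comp_rotation ν hμ hΦ, hν]
    _ ≤ ∫ z, 2 * (f z.1 * f z.2) ∂μ.prod μ :=
        integral_mono_ae (integrable_integral_comp_rotation ν hμ hΦ)
          ((hf.mul_prod hf).const_mul 2) hcircle
    _ = 2 * (∫ x, f x ∂μ) ^ 2 := by
        rw [integral_const_mul, integral_prod_mul, sq]

end Rotation

theorem variance_le_integral_fderiv_sq {E : Type*} [NormedAddCommGroup E] [NormedSpace ℝ E]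
    [SecondCountableTopology E] [CompleteSpace E] [MeasurableSpace E] [BorelSpace E]
    {μ : Measure E} [IsGaussian μ] (hμ : μ[id] = 0) {f : E → ℝ} (hf : MemLp f 2 μ)
    (hf1 : ∀ᵐ z ∂μ.prod μ, ∀ θ, ContDiffAt ℝ 1 f (ContinuousLinearMap.rotation θ z).1)
    (hf' : Integrable (fun z => fderiv ℝ f z.1 z.2 ^ 2) (μ.prod μ)) :
    Var[f; μ] ≤ ∫ z, fderiv ℝ f z.1 z.2 ^ 2 ∂μ.prod μ := by
  let g : E → ℝ := fun x => f x - μ[f]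
  have hg : MemLp g 2 μ := hf.sub (memLp_const _)
  have hg_mean : ∫ x, g x ∂μ = 0 := by
    simp [g, integral_sub (hf.integrable one_le_two) (integrable_const _)]
  have hg' : fderiv ℝ g = fderiv ℝ f := funext fun x => fderiv_sub_const _
  have hg1 : ∀ᵐ z ∂μ.prod μ, ∀ θ, ContDiffAt ℝ 1 g (ContinuousLinearMap.rotation θ z).1 :=
    hf1.mono fun z hz θ => (hz θ).sub contDiffAt_const
  have hg_sq : Integrable (fun z : E × E => g z.1 ^ 2) (μ.prod μ) := hg.integrable_sq.comp_fst μ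
  rw [← hg'] at hf' ⊢
  have h := integral_sq_sub_fderiv_sq_le (IsGaussian.map_rotation_eq_self hμ)
    (hg.integrable one_le_two) hg1 (hg_sq.sub hf')
  rw [hg_mean, integral_sub hg_sq hf', integral_fun_fst (fun x => g x ^ 2),
    probReal_univ, one_smul] at h
  rw [variance_eq_integral hf.aemeasurable]
  refine sub_nonpos.1 (nonpos_of_mul_nonpos_right (h.trans_eq (by simp)) (by positivity))

theorem ae_linearIndependent_pair {E : Type*} [NormedAddCommGroup E] [NormedSpace ℝ E]
    [MeasurableSpace E] [BorelSpace E] [FiniteDimensional ℝ E] (μ : Measure E)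
    [μ.IsAddHaarMeasure] (hE : 1 < finrank ℝ E) :
    ∀ᵐ z ∂μ.prod μ, LinearIndependent ℝ ![z.1, z.2] := by
  have hopen : IsOpen {z : E × E | LinearIndependent ℝ ![z.1, z.2]} :=
    isOpen_setOfPred_linearIndependent.preimage (f := fun z : E × E => ![z.1, z.2]) (by fun_prop)
  have : Nontrivial E := nontrivial_of_finrank_pos (zero_lt_one.trans hE)
  rw [Measure.ae_prod_iff_ae_ae hopen.measurableSet]
  filter_upwards [Measure.ae_ne μ 0] with x hx
  have hspan : Submodule.span ℝ {x} ≠ ⊤ := fun h => by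
    have := finrank_span_singleton (K := ℝ) hx
    rw [h, finrank_top] at this
    exact hE.ne' this
  filter_upwards [measure_eq_zero_iff_ae_notMem.1 (Measure.addHaar_submodule μ _ hspan)] with y hy
  rw [LinearIndependent.pair_iff' hx]
  rintro a rfl
  exact hy (Submodule.smul_mem _ _ (Submodule.mem_span_singleton_self x))

theorem fst_rotation_ne_zero {E : Type*} [NormedAddCommGroup E] [NormedSpace ℝ E] {z : E × E}
    (hz : LinearIndependent ℝ ![z.1, z.2]) (θ : ℝ) :
    (ContinuousLinearMap.rotation θ z).1 ≠ 0 := fun h => by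
  obtain ⟨hcos, hsin⟩ := LinearIndependent.pair_iff.1 hz _ _ h
  simpa [hcos, hsin] using sin_sq_add_cos_sq θ

/-- The density of the standard Gaussian measure of an `n`-dimensional inner product space with
respect to Lebesgue measure, as a function of the distance to the origin. -/
def stdGaussianRadialPDF (n : ℕ) (r : ℝ) : ℝ := ((2 * π) ^ (n / 2 : ℝ))⁻¹ * rexp (-r ^ 2 / 2)

theorem stdGaussianRadialPDF_nonneg (n : ℕ) (r : ℝ) : 0 ≤ stdGaussianRadialPDF n r := by
  unfold stdGaussianRadialPDF
  positivity

theorem continuous_stdGaussianRadialPDF (n : ℕ) : Continuous (stdGaussianRadialPDF n) := by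
  unfold stdGaussianRadialPDF
  fun_prop

theorem integral_withDensity_stdGaussianRadialPDF {E F : Type*} [NormedAddCommGroup E]
    [MeasurableSpace E] [OpensMeasurableSpace E] [NormedAddCommGroup F] [NormedSpace ℝ F]
    (μ : Measure E) (n : ℕ) (g : E → F) :
    ∫ x, g x ∂μ.withDensity (fun x => ENNReal.ofReal (stdGaussianRadialPDF n ‖x‖)) =
      ∫ x, stdGaussianRadialPDF n ‖x‖ • g x ∂μ := by
  have hmeas : Measurable fun x : E => ENNReal.ofReal (stdGaussianRadialPDF n ‖x‖) :=
    ((continuous_stdGaussianRadialPDF n).measurable.comp measurable_norm).ennreal_ofReal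
  rw [integral_withDensity_eq_integral_toReal_smul hmeas
    (ae_of_all _ fun _ => ENNReal.ofReal_lt_top)]
  simp only [ENNReal.toReal_ofReal (stdGaussianRadialPDF_nonneg _ _)]

section StdGaussian

variable {E : Type*} [NormedAddCommGroup E] [InnerProductSpace ℝ E] [FiniteDimensional ℝ E]
  [MeasurableSpace E] [BorelSpace E]

theorem integral_sq_strongDual_stdGaussian (L : StrongDual ℝ E) :
    ∫ x, L x ^ 2 ∂stdGaussian E = ‖L‖ ^ 2 := by
  rw [← variance_dual_stdGaussian L, variance_of_integral_eq_zero (by fun_prop)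
    (integral_strongDual_stdGaussian L)]

theorem integral_norm_sq_stdGaussian : ∫ x, ‖x‖ ^ 2 ∂stdGaussian E = finrank ℝ E := by
  let b := stdOrthonormalBasis ℝ E
  calc ∫ x, ‖x‖ ^ 2 ∂stdGaussian E
      = ∫ x, ∑ i, innerSL ℝ (b i) x ^ 2 ∂stdGaussian E := by
        simp only [innerSL_apply_apply, b.sum_sq_inner_right]
    _ = ∑ i, ∫ x, innerSL ℝ (b i) x ^ 2 ∂stdGaussian E :=
        integral_finsetSum _ fun i _ => (IsGaussian.memLp_dual _ _ 2 (by simp)).integrable_sq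
    _ = finrank ℝ E := by
        simp only [integral_sq_strongDual_stdGaussian, innerSL_apply_norm, b.norm_eq_one, one_pow,
          Finset.sum_const, Finset.card_univ, Fintype.card_fin, nsmul_eq_mul, mul_one]

theorem integrable_stdGaussianRadialPDF_norm (n : ℕ) :
    Integrable (fun x : E => stdGaussianRadialPDF n ‖x‖) := by
  have h := (GaussianFourier.integrable_cexp_neg_mul_sq_norm_add (b := 1 / 2) (V := E)
    (by norm_num) 0 0).re
  refine (h.const_mul ((2 * π) ^ (n / 2 : ℝ))⁻¹).congr (ae_of_all _ fun x => ?_)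
  simp only [stdGaussianRadialPDF]
  have : -(1 / 2 : ℂ) * (‖x‖ : ℂ) ^ 2 + 0 * (⟪(0 : E), x⟫ : ℂ) = ((-‖x‖ ^ 2 / 2 : ℝ) : ℂ) := by
    push_cast
    ring
  rw [this, RCLike.re_eq_complex_re, Complex.exp_ofReal_re]

theorem stdGaussian_eq_withDensity :
    stdGaussian E =
      volume.withDensity fun x => ENNReal.ofReal (stdGaussianRadialPDF (finrank ℝ E) ‖x‖) := by
  have := isFiniteMeasure_withDensity_ofReal
    (integrable_stdGaussianRadialPDF_norm (E := E) (finrank ℝ E)).2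
  refine Measure.ext_of_charFun (funext fun t => ?_)
  have hpdf (x : E) : stdGaussianRadialPDF (finrank ℝ E) ‖x‖ • Complex.exp (⟪x, t⟫ * Complex.I) =
      (((2 * π) ^ (finrank ℝ E / 2 : ℝ))⁻¹ : ℝ) *
        Complex.exp (-(1 / 2) * ‖x‖ ^ 2 + Complex.I * ⟪t, x⟫) := by
    rw [Complex.exp_add, real_inner_comm, stdGaussianRadialPDF, Complex.real_smul]
    push_cast
    ring_nf
  have hpow : (π / (1 / 2) : ℂ) ^ (finrank ℝ E / 2 : ℂ) =
      ((2 * π) ^ (finrank ℝ E / 2 : ℝ) : ℝ) := by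
    rw [Complex.ofReal_cpow (by positivity)]
    push_cast
    ring_nf
  rw [charFun_stdGaussian, charFun_apply, integral_withDensity_stdGaussianRadialPDF]
  simp only [hpdf]
  rw [integral_const_mul, GaussianFourier.integral_cexp_neg_mul_sq_norm_add (by norm_num), hpow,
    ← mul_assoc, ← Complex.ofReal_mul, inv_mul_cancel₀ (by positivity), Complex.ofReal_one, one_mul,
    Complex.I_sq]
  ring_nf

theorem integral_stdGaussian {F : Type*} [NormedAddCommGroup F] [NormedSpace ℝ F] (g : E → F) :
    ∫ x, g x ∂stdGaussian E = ∫ x, stdGaussianRadialPDF (finrank ℝ E) ‖x‖ • g x := by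
  rw [stdGaussian_eq_withDensity, integral_withDensity_stdGaussianRadialPDF]

theorem stdGaussian_absolutelyContinuous : stdGaussian E ≪ volume := by
  rw [stdGaussian_eq_withDensity]
  exact withDensity_absolutelyContinuous _ _

theorem variance_stdGaussian_le_integral_norm_fderiv_sq (hE : 1 < finrank ℝ E) {f : E → ℝ}
    (hf : ∀ x ≠ 0, ContDiffAt ℝ 1 f x) (hf2 : MemLp f 2 (stdGaussian E))
    (hf' : MemLp (fderiv ℝ f) 2 (stdGaussian E)) :
    Var[f; stdGaussian E] ≤ ∫ x, ‖fderiv ℝ f x‖ ^ 2 ∂stdGaussian E := by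
  have hac := (stdGaussian_absolutelyContinuous (E := E)).prod
    (stdGaussian_absolutelyContinuous (E := E))
  have hmeas : Measurable fun z : E × E => fderiv ℝ f z.1 z.2 :=
    isBoundedBilinearMap_apply.continuous.measurable.comp
      (((measurable_fderiv ℝ f).comp measurable_fst).prodMk measurable_snd)
  have hid : Integrable (fun x : E => ‖x‖ ^ 2) (stdGaussian E) :=
    (IsGaussian.memLp_id (stdGaussian E) 2 (by simp)).norm.integrable_sq
  have hint :
      Integrable (fun z => fderiv ℝ f z.1 z.2 ^ 2) ((stdGaussian E).prod (stdGaussian E)) := by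
    refine (hf'.norm.integrable_sq.mul_prod hid).mono' (hmeas.pow_const 2).aestronglyMeasurable
      (ae_of_all _ fun z => ?_)
    rw [norm_pow, ← mul_pow]
    gcongr
    exact (fderiv ℝ f z.1).le_opNorm z.2
  calc Var[f; stdGaussian E]
      ≤ ∫ z, fderiv ℝ f z.1 z.2 ^ 2 ∂(stdGaussian E).prod (stdGaussian E) := by
        refine variance_le_integral_fderiv_sq integral_id_stdGaussian hf2 ?_ hint
        filter_upwards [hac.ae_le (ae_linearIndependent_pair volume hE)] with z hz θ
        exact hf _ (fst_rotation_ne_zero hz θ)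
    _ = ∫ x, ‖fderiv ℝ f x‖ ^ 2 ∂stdGaussian E := by
        rw [integral_prod _ hint]
        simp only [integral_sq_strongDual_stdGaussian]

end StdGaussian

section PolarCoordinates

theorem integral_volumeIoiPow {F : Type*} [NormedAddCommGroup F] [NormedSpace ℝ F] (n : ℕ)
    (f : ℝ → F) :
    ∫ r : Ioi (0 : ℝ), f r ∂Measure.volumeIoiPow n = ∫ r in Ioi (0 : ℝ), r ^ n • f r := by
  rw [Measure.volumeIoiPow, integral_withDensity_eq_integral_toReal_smul (by fun_prop)
    (ae_of_all _ fun _ => ENNReal.ofReal_lt_top),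
    ← integral_subtype_comap measurableSet_Ioi fun r => r ^ n • f r]
  exact integral_congr_ae (ae_of_all _ fun r =>
    congrArg (· • f r) (ENNReal.toReal_ofReal (pow_nonneg (le_of_lt r.2) n)))

variable {E : Type*} [NormedAddCommGroup E] [NormedSpace ℝ E]

theorem smul_homeomorphUnitSphereProd (x : ({0}ᶜ : Set E)) :
    ((homeomorphUnitSphereProd E x).2 : ℝ) • ((homeomorphUnitSphereProd E x).1 : E) = x :=
  congrArg Subtype.val ((homeomorphUnitSphereProd E).symm_apply_apply x)

variable [FiniteDimensional ℝ E] [MeasurableSpace E] [BorelSpace E] {F : Type*}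
  [NormedAddCommGroup F] (μ : Measure E) [μ.IsAddHaarMeasure]

theorem integrable_polar {f : E → F} (hf : Integrable f μ) :
    Integrable (fun z : sphere (0 : E) 1 × Ioi (0 : ℝ) => f ((z.2 : ℝ) • (z.1 : E)))
      (μ.toSphere.prod (Measure.volumeIoiPow (finrank ℝ E - 1))) := by
  rw [← μ.measurePreserving_homeomorphUnitSphereProd.integrable_comp_emb
    (homeomorphUnitSphereProd E).measurableEmbedding]
  simp only [Function.comp_def, smul_homeomorphUnitSphereProd]
  exact (integrableOn_iff_comap_subtypeVal (measurableSet_singleton _).compl).1 hf.integrableOn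

variable [Nontrivial E]

theorem integral_polar [NormedSpace ℝ F] (f : E → F) :
    ∫ x, f x ∂μ = ∫ z : sphere (0 : E) 1 × Ioi (0 : ℝ), f ((z.2 : ℝ) • (z.1 : E))
      ∂μ.toSphere.prod (Measure.volumeIoiPow (finrank ℝ E - 1)) := by
  rw [← μ.measurePreserving_homeomorphUnitSphereProd.integral_comp
    (homeomorphUnitSphereProd E).measurableEmbedding]
  simp only [smul_homeomorphUnitSphereProd]
  rw [integral_subtype_comap (measurableSet_singleton (0 : E)).compl, restrict_compl_singleton]

theorem integral_norm_mul_normalize (a : ℝ → ℝ) (b : E → ℝ) :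
    ∫ x, a ‖x‖ * b (‖x‖⁻¹ • x) ∂μ = (∫ x, a ‖x‖ ∂μ) * ⨍ ω : sphere (0 : E) 1, b ω ∂μ.toSphere := by
  have hsplit (b : E → ℝ) : ∫ x, a ‖x‖ * b (‖x‖⁻¹ • x) ∂μ =
      (∫ ω : sphere (0 : E) 1, b ω ∂μ.toSphere) *
        ∫ r : Ioi (0 : ℝ), a r ∂Measure.volumeIoiPow (finrank ℝ E - 1) := by
    rw [integral_polar, ← integral_prod_mul]
    refine integral_congr_ae (ae_of_all _ fun ⟨ω, r⟩ => ?_)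
    have hr : (0 : ℝ) < r := r.2
    simp [norm_smul, abs_of_pos hr, smul_smul, hr.ne', mul_comm]
  have : NeZero μ.toSphere := ⟨μ.toSphere_ne_zero⟩
  have hσ : μ.toSphere.real univ ≠ 0 := measureReal_univ_ne_zero
  have hone := hsplit 1
  simp only [Pi.one_apply, mul_one, integral_const, smul_eq_mul] at hone
  rw [hsplit, hone, average_eq, smul_eq_mul]
  field_simp

theorem integral_le_integral_of_forall_sphere {f g : E → ℝ} (hf : Integrable f μ)
    (hg : Integrable g μ)
    (h : ∀ r : ℝ, 0 < r → ∫ ω : sphere (0 : E) 1, f (r • (ω : E)) ∂μ.toSphere ≤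
      ∫ ω : sphere (0 : E) 1, g (r • (ω : E)) ∂μ.toSphere) :
    ∫ x, f x ∂μ ≤ ∫ x, g x ∂μ := by
  have hf' := integrable_polar μ hf
  have hg' := integrable_polar μ hg
  rw [integral_polar μ f, integral_polar μ g, integral_prod_symm _ hf', integral_prod_symm _ hg']
  exact integral_mono hf'.integral_prod_right hg'.integral_prod_right fun r => h r r.2

theorem integral_le_integral_of_forall_ray {f g : E → ℝ} (hf : Integrable f μ)
    (hg : Integrable g μ)
    (h : ∀ ω : sphere (0 : E) 1,
      ∫ r in Ioi (0 : ℝ), r ^ (finrank ℝ E - 1) * f (r • (ω : E)) ≤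
        ∫ r in Ioi (0 : ℝ), r ^ (finrank ℝ E - 1) * g (r • (ω : E))) :
    ∫ x, f x ∂μ ≤ ∫ x, g x ∂μ := by
  have hf' := integrable_polar μ hf
  have hg' := integrable_polar μ hg
  rw [integral_polar μ f, integral_polar μ g, integral_prod _ hf', integral_prod _ hg']
  refine integral_mono hf'.integral_prod_left hg'.integral_prod_left fun ω => ?_
  simp only [integral_volumeIoiPow _ fun r => f (r • (ω : E)),
    integral_volumeIoiPow _ fun r => g (r • (ω : E)), smul_eq_mul]
  exact h ω

end PolarCoordinates

theorem integral_stdGaussian_norm_mul_normalize {E : Type*} [NormedAddCommGroup E]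
    [InnerProductSpace ℝ E] [FiniteDimensional ℝ E] [Nontrivial E] [MeasurableSpace E]
    [BorelSpace E] (a : ℝ → ℝ) (b : E → ℝ) :
    ∫ x, a ‖x‖ * b (‖x‖⁻¹ • x) ∂stdGaussian E = (∫ x, a ‖x‖ ∂stdGaussian E) *
      ⨍ ω : sphere (0 : E) 1, b ω ∂(volume : Measure E).toSphere := by
  simp only [integral_stdGaussian, smul_eq_mul, ← mul_assoc]
  exact integral_norm_mul_normalize volume
    (fun r => stdGaussianRadialPDF (finrank ℝ E) r * a r) b

section RadialTangential

variable {E : Type*} [NormedAddCommGroup E] [NormedSpace ℝ E]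

/-- The radial derivative `∂u/∂r` at `x`; the junk value at the origin is `0`. -/
def radialDeriv (u : E → ℝ) (x : E) : ℝ := fderiv ℝ u x (‖x‖⁻¹ • x)

/-- The squared norm of the component of `∇u(x)` tangent to the sphere through `x` centered at the
origin, written as the difference between the full and the radial squared norms. -/
def tangentialNormSq (u : E → ℝ) (x : E) : ℝ := ‖fderiv ℝ u x‖ ^ 2 - radialDeriv u x ^ 2

theorem abs_radialDeriv_le (u : E → ℝ) (x : E) : |radialDeriv u x| ≤ ‖fderiv ℝ u x‖ :=
  (fderiv ℝ u x).unit_le_opNorm _ (mem_closedBall_zero_iff.1 (inv_norm_smul_mem_unitClosedBall x))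

theorem tangentialNormSq_nonneg (u : E → ℝ) (x : E) : 0 ≤ tangentialNormSq u x :=
  sub_nonneg.2 (sq_le_sq' (neg_le_of_abs_le (abs_radialDeriv_le u x))
    (le_of_abs_le (abs_radialDeriv_le u x)))

theorem continuousOn_radialDeriv {u : E → ℝ} (hu : ContDiff ℝ 1 u) :
    ContinuousOn (radialDeriv u) {0}ᶜ :=
  (hu.continuous_fderiv one_ne_zero).continuousOn.clm_apply
    ((continuousOn_id.norm.inv₀ fun _ hx => norm_ne_zero_iff.2 hx).smul continuousOn_id)

theorem continuousOn_tangentialNormSq {u : E → ℝ} (hu : ContDiff ℝ 1 u) :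
    ContinuousOn (tangentialNormSq u) {0}ᶜ :=
  ((hu.continuous_fderiv one_ne_zero).norm.pow 2).continuousOn.sub
    ((continuousOn_radialDeriv hu).pow 2)

end RadialTangential

section HomogeneousExtension

variable {E : Type*} [NormedAddCommGroup E] [InnerProductSpace ℝ E]

/-- The extension of the restriction of `φ` to the unit sphere that is positively homogeneous of
degree one; the Gaussian Poincaré inequality for it becomes the one for `φ` on the sphere. -/
def homogeneousExtension (φ : E → ℝ) (x : E) : ℝ := ‖x‖ * φ (‖x‖⁻¹ • x)

theorem hasFDerivAt_norm {x : E} (hx : x ≠ 0) :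
    HasFDerivAt (fun y : E => ‖y‖) (innerSL ℝ (‖x‖⁻¹ • x)) x := by
  have h := (hasStrictFDerivAt_norm_sq x).hasFDerivAt.sqrt (by simpa using hx)
  simp only [sqrt_sq (norm_nonneg _)] at h
  refine h.congr_fderiv ?_
  ext v
  simp only [one_div, mul_inv_rev, smul_apply, coe_innerSL_apply, nsmul_eq_mul, Nat.cast_ofNat,
    smul_eq_mul, map_smul]
  field_simp

theorem contDiffAt_homogeneousExtension {φ : E → ℝ} (hφ : ContDiff ℝ 1 φ) {x : E} (hx : x ≠ 0) :
    ContDiffAt ℝ 1 (homogeneousExtension φ) x := by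
  have hn : ContDiffAt ℝ 1 (fun y : E => ‖y‖) x := contDiffAt_norm ℝ hx
  exact hn.mul (hφ.contDiffAt.comp x ((hn.inv (norm_ne_zero_iff.2 hx)).smul contDiffAt_id))

theorem fderiv_homogeneousExtension {φ : E → ℝ} {x ω : E} (hx : x ≠ 0) (hω : ‖x‖⁻¹ • x = ω)
    (hφ : DifferentiableAt ℝ φ ω) :
    fderiv ℝ (homogeneousExtension φ) x =
      (φ ω - fderiv ℝ φ ω ω) • innerSL ℝ ω + fderiv ℝ φ ω := by
  subst hω
  have hx' := norm_ne_zero_iff.2 hx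
  have hn := hasFDerivAt_norm hx
  have hinv := (hasDerivAt_inv hx').comp_hasFDerivAt x hn
  have hnormalize : HasFDerivAt (fun y : E => ‖y‖⁻¹ • y) _ x := hinv.smul (hasFDerivAt_id x)
  have hcomp := hφ.hasFDerivAt.comp (f := fun y : E => ‖y‖⁻¹ • y) x hnormalize
  refine (hn.mul hcomp).fderiv.trans ?_
  ext v
  simp only [Function.comp_apply, map_smul, neg_smul, ContinuousLinearMap.comp_add,
    ContinuousLinearMap.comp_smulₛₗ, map_inv₀, ringHom_apply, ContinuousLinearMap.comp_id, smul_add,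
    add_apply, smul_apply, smul_eq_mul, ContinuousLinearMap.comp_apply,
    ContinuousLinearMap.smulRight_apply, neg_apply, coe_innerSL_apply, map_neg, mul_neg]
  field_simp
  ring

theorem norm_smul_innerSL_add_sq [CompleteSpace E] {ω : E} (hω : ‖ω‖ = 1) (c : ℝ)
    (L : StrongDual ℝ E) : ‖c • innerSL ℝ ω + L‖ ^ 2 = c ^ 2 + 2 * c * L ω + ‖L‖ ^ 2 := by
  obtain ⟨v, rfl⟩ := (InnerProductSpace.toDual ℝ E).surjective L
  have : c • innerSL ℝ ω = InnerProductSpace.toDual ℝ E (c • ω) := by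
    ext; simp
  rw [this, ← map_add, LinearIsometryEquiv.norm_map, LinearIsometryEquiv.norm_map,
    norm_add_sq_real, norm_smul, hω, InnerProductSpace.toDual_apply_apply, real_inner_smul_left,
    real_inner_comm, norm_eq_abs, mul_one, sq_abs, mul_assoc]

theorem norm_fderiv_homogeneousExtension_sq [CompleteSpace E] {φ : E → ℝ} {x : E} (hx : x ≠ 0)
    (hφ : DifferentiableAt ℝ φ (‖x‖⁻¹ • x)) :
    ‖fderiv ℝ (homogeneousExtension φ) x‖ ^ 2 =
      φ (‖x‖⁻¹ • x) ^ 2 + tangentialNormSq φ (‖x‖⁻¹ • x) := by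
  have hω : ‖‖x‖⁻¹ • x‖ = 1 := norm_smul_inv_norm (𝕜 := ℝ) hx
  rw [fderiv_homogeneousExtension hx rfl hφ, norm_smul_innerSL_add_sq hω, tangentialNormSq,
    radialDeriv, hω, inv_one, one_smul]
  ring

end HomogeneousExtension

section SpherePoincare

variable {E : Type*} [NormedAddCommGroup E] [InnerProductSpace ℝ E] [FiniteDimensional ℝ E]
  [MeasurableSpace E] [BorelSpace E] {φ : E → ℝ}

theorem memLp_homogeneousExtension (hφ : Continuous φ) :
    MemLp (homogeneousExtension φ) 2 (stdGaussian E) := by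
  obtain ⟨M, hM⟩ := (isCompact_closedBall (0 : E) 1).exists_bound_of_continuousOn hφ.continuousOn
  refine (IsGaussian.memLp_id (stdGaussian E) 2 (by simp)).of_le_mul (c := M) ?_
    (ae_of_all _ fun x => ?_)
  · exact (measurable_norm.mul (hφ.measurable.comp
      (measurable_norm.inv.smul measurable_id))).aestronglyMeasurable
  · rw [homogeneousExtension, norm_mul, norm_norm, mul_comm, id]
    gcongr
    exact hM _ (inv_norm_smul_mem_unitClosedBall x)

theorem ae_norm_fderiv_homogeneousExtension_sq [Nontrivial E] (hφ : Differentiable ℝ φ) :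
    ∀ᵐ x ∂stdGaussian E, ‖fderiv ℝ (homogeneousExtension φ) x‖ ^ 2 =
      φ (‖x‖⁻¹ • x) ^ 2 + tangentialNormSq φ (‖x‖⁻¹ • x) := by
  filter_upwards [stdGaussian_absolutelyContinuous.ae_le (Measure.ae_ne volume (0 : E))] with x hx
  exact norm_fderiv_homogeneousExtension_sq hx (hφ _)

theorem memLp_fderiv_homogeneousExtension [Nontrivial E] (hφ : ContDiff ℝ 1 φ) :
    MemLp (fderiv ℝ (homogeneousExtension φ)) 2 (stdGaussian E) := by
  have hcont : ContinuousOn (fun ω => φ ω ^ 2 + tangentialNormSq φ ω) (sphere 0 1) :=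
    (hφ.continuous.pow 2).continuousOn.add ((continuousOn_tangentialNormSq hφ).mono
      fun ω hω => ne_zero_of_mem_unit_sphere ⟨ω, hω⟩)
  obtain ⟨C, hC⟩ := (isCompact_sphere (0 : E) 1).exists_bound_of_continuousOn hcont
  have hmeas := (measurable_fderiv ℝ (homogeneousExtension φ)).aestronglyMeasurable
    (μ := stdGaussian E)
  refine (memLp_two_iff_integrable_sq_norm hmeas).2
    (Integrable.of_bound (hmeas.norm.pow 2) C ?_)
  filter_upwards [ae_norm_fderiv_homogeneousExtension_sq (hφ.differentiable one_ne_zero),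
    stdGaussian_absolutelyContinuous.ae_le (Measure.ae_ne volume (0 : E))] with x hx hx0
  rw [hx]
  exact hC _ (mem_sphere_zero_iff_norm.2 (norm_smul_inv_norm (𝕜 := ℝ) hx0))

theorem finrank_mul_average_sq_le (hE : 1 < finrank ℝ E) (hφ : ContDiff ℝ 1 φ)
    (hφ_avg : ⨍ ω : sphere (0 : E) 1, φ ω ∂(volume : Measure E).toSphere = 0) :
    finrank ℝ E * ⨍ ω : sphere (0 : E) 1, φ ω ^ 2 ∂(volume : Measure E).toSphere ≤
      ⨍ ω : sphere (0 : E) 1, (φ ω ^ 2 + tangentialNormSq φ ω) ∂(volume : Measure E).toSphere := by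
  have : Nontrivial E := nontrivial_of_finrank_pos (zero_lt_one.trans hE)
  have hmem := memLp_homogeneousExtension hφ.continuous
  have hmean : ∫ x, homogeneousExtension φ x ∂stdGaussian E = 0 := by
    simp only [homogeneousExtension]
    rw [integral_stdGaussian_norm_mul_normalize (fun r => r) φ, hφ_avg, mul_zero]
  calc finrank ℝ E * ⨍ ω : sphere (0 : E) 1, φ ω ^ 2 ∂(volume : Measure E).toSphere
      = Var[homogeneousExtension φ; stdGaussian E] := by
        rw [variance_of_integral_eq_zero hmem.aemeasurable hmean]
        simp only [homogeneousExtension, mul_pow]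
        rw [integral_stdGaussian_norm_mul_normalize (· ^ 2) (φ · ^ 2),
          integral_norm_sq_stdGaussian]
    _ ≤ ∫ x, ‖fderiv ℝ (homogeneousExtension φ) x‖ ^ 2 ∂stdGaussian E :=
        variance_stdGaussian_le_integral_norm_fderiv_sq hE
          (fun x => contDiffAt_homogeneousExtension hφ) hmem
          (memLp_fderiv_homogeneousExtension hφ)
    _ = ⨍ ω : sphere (0 : E) 1, (φ ω ^ 2 + tangentialNormSq φ ω)
          ∂(volume : Measure E).toSphere := by
        rw [integral_congr_ae
          (ae_norm_fderiv_homogeneousExtension_sq (hφ.differentiable one_ne_zero))]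
        simpa using integral_stdGaussian_norm_mul_normalize 1
          fun ω => φ ω ^ 2 + tangentialNormSq φ ω

theorem integrable_toSphere_of_continuousOn {f : E → ℝ} (hf : ContinuousOn f (sphere 0 1))
    (μ : Measure E) [μ.IsAddHaarMeasure] :
    Integrable (fun ω : sphere (0 : E) 1 => f ω) μ.toSphere :=
  (continuousOn_iff_continuous_domRestrict.1 hf).integrable_of_hasCompactSupport
    (HasCompactSupport.of_compactSpace _)

theorem sphere_poincare (hφ : ContDiff ℝ 1 φ)
    (hφ_avg : ∫ ω : sphere (0 : E) 1, φ ω ∂(volume : Measure E).toSphere = 0) :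
    ((finrank ℝ E : ℝ) - 1) * ∫ ω : sphere (0 : E) 1, φ ω ^ 2 ∂(volume : Measure E).toSphere ≤
      ∫ ω : sphere (0 : E) 1, tangentialNormSq φ ω ∂(volume : Measure E).toSphere := by
  rcases le_or_gt (finrank ℝ E) 1 with hE | hE
  · refine (mul_nonpos_of_nonpos_of_nonneg ?_ (integral_nonneg fun ω => sq_nonneg _)).trans
      (integral_nonneg fun ω => tangentialNormSq_nonneg φ ω)
    exact sub_nonpos.2 (by exact_mod_cast hE)
  have : Nontrivial E := nontrivial_of_finrank_pos (zero_lt_one.trans hE)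
  have : NeZero (volume : Measure E).toSphere := ⟨(volume : Measure E).toSphere_ne_zero⟩
  have hφ_sq := integrable_toSphere_of_continuousOn (f := fun ω => φ ω ^ 2)
    (hφ.continuous.pow 2).continuousOn volume
  have htan := integrable_toSphere_of_continuousOn ((continuousOn_tangentialNormSq hφ).mono
      fun ω hω => ne_zero_of_mem_unit_sphere ⟨ω, hω⟩) volume
  have h := finrank_mul_average_sq_le hE hφ (by rw [average_eq, hφ_avg, smul_zero])
  rw [average_eq, average_eq, smul_eq_mul, smul_eq_mul, mul_left_comm,
    mul_le_mul_iff_right₀ (inv_pos.2 measureReal_univ_pos), integral_add hφ_sq htan] at h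
  linarith

end SpherePoincare

section HalfLine

variable {ψ : ℝ → ℝ}

theorem hasCompactSupport_dslope_zero (hψ_supp : HasCompactSupport ψ) (hψ_zero : ψ 0 = 0) :
    HasCompactSupport (dslope ψ 0) := by
  refine HasCompactSupport.intro (hψ_supp.isCompact.insert 0) fun r hr => ?_
  obtain ⟨hr0, hr⟩ := not_or.1 hr
  rw [dslope_of_ne _ hr0, slope_def_field, hψ_zero, image_eq_zero_of_notMem_tsupport hr]
  simp

theorem continuous_dslope_zero (hψ : ContDiff ℝ 1 ψ) : Continuous (dslope ψ 0) :=
  continuousOn_univ.1 <| (continuousOn_dslope univ_mem).2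
    ⟨hψ.continuous.continuousOn, hψ.differentiable_one 0⟩

theorem dslope_zero_of_ne (hψ_zero : ψ 0 = 0) {r : ℝ} (hr : r ≠ 0) : dslope ψ 0 r = ψ r / r := by
  rw [dslope_of_ne _ hr, slope_def_field, hψ_zero, sub_zero, sub_zero]

theorem hasDerivAt_pow_mul_dslope_zero_sq (n : ℕ) (hψ : Differentiable ℝ ψ) (hψ_zero : ψ 0 = 0)
    {r : ℝ} (hr : r ≠ 0) :
    HasDerivAt (fun r => r ^ (n + 1) * dslope ψ 0 r ^ 2)
      (r ^ n * ((n - 1) * dslope ψ 0 r ^ 2 + 2 * dslope ψ 0 r * deriv ψ r)) r := by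
  have hq : HasDerivAt (dslope ψ 0) ((deriv ψ r * r - ψ r * 1) / r ^ 2) r :=
    ((hψ r).hasDerivAt.div (hasDerivAt_id r) hr).congr_of_eventuallyEq <| by
      filter_upwards [eventually_ne_nhds hr] with s hs using dslope_zero_of_ne hψ_zero hs
  refine ((hasDerivAt_pow (n + 1) r).mul (hq.pow 2)).congr_deriv ?_
  simp only [Pi.pow_apply, dslope_zero_of_ne hψ_zero hr]
  push_cast
  field_simp
  ring

theorem integrableOn_Ioi_pow_mul (n : ℕ) {f : ℝ → ℝ} (hf : Continuous f)
    (hf_supp : HasCompactSupport f) : IntegrableOn (fun r => r ^ n * f r) (Ioi 0) :=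
  (((continuous_pow n).mul hf).integrable_of_hasCompactSupport hf_supp.mul_left).integrableOn

theorem integral_Ioi_pow_mul_dslope_zero (n : ℕ) (hψ : ContDiff ℝ 1 ψ)
    (hψ_supp : HasCompactSupport ψ) (hψ_zero : ψ 0 = 0) :
    ∫ r in Ioi (0 : ℝ),
      r ^ n * ((n - 1) * dslope ψ 0 r ^ 2 + 2 * dslope ψ 0 r * deriv ψ r) = 0 := by
  have hq := continuous_dslope_zero hψ
  have hq_supp := hasCompactSupport_dslope_zero hψ_supp hψ_zero
  have : Continuous (deriv ψ) := hψ.continuous_deriv_one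
  have hH_supp : HasCompactSupport fun r => r ^ (n + 1) * dslope ψ 0 r ^ 2 :=
    hq_supp.mono fun r hr hq0 => hr (by simp [hq0])
  have hH'_int := integrableOn_Ioi_pow_mul n
    (f := fun r => (n - 1) * dslope ψ 0 r ^ 2 + 2 * dslope ψ 0 r * deriv ψ r) (by fun_prop)
    (hq_supp.mono fun r hr hq0 => hr (by simp [hq0]))
  rw [integral_Ioi_of_hasDerivAt_of_tendsto
    (f := fun r => r ^ (n + 1) * dslope ψ 0 r ^ 2) (m := 0)
    (show Continuous fun r => r ^ (n + 1) * dslope ψ 0 r ^ 2 by fun_prop).continuousWithinAt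
    (fun r hr => hasDerivAt_pow_mul_dslope_zero_sq n hψ.differentiable_one hψ_zero (ne_of_gt hr))
    hH'_int
    (hH_supp.is_zero_at_infty.mono_left atTop_le_cocompact)]
  simp

theorem integral_Ioi_pow_mul_sq_div_sq_le (n : ℕ) (hψ : ContDiff ℝ 1 ψ)
    (hψ_supp : HasCompactSupport ψ) (hψ_zero : ψ 0 = 0) :
    ((n - 1 : ℝ) / 2) ^ 2 * ∫ r in Ioi (0 : ℝ), r ^ n * (ψ r ^ 2 / r ^ 2) ≤
      ∫ r in Ioi (0 : ℝ), r ^ n * deriv ψ r ^ 2 := by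
  let q := dslope ψ 0
  have hq : Continuous q := continuous_dslope_zero hψ
  have : Continuous (deriv ψ) := hψ.continuous_deriv_one
  have hq_supp : HasCompactSupport q := hasCompactSupport_dslope_zero hψ_supp hψ_zero
  have hq_int := integrableOn_Ioi_pow_mul n (f := fun r => ((n - 1 : ℝ) / 2) ^ 2 * q r ^ 2)
    (by fun_prop) (hq_supp.mono fun r hr hq0 => hr (by simp [hq0]))
  have hψ'_int := integrableOn_Ioi_pow_mul n (f := fun r => deriv ψ r ^ 2) (by fun_prop)
    (hψ_supp.deriv.mono fun r hr h0 => hr (by simp [h0]))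
  have hcross_int := integrableOn_Ioi_pow_mul n
    (f := fun r => (n - 1) * q r ^ 2 + 2 * q r * deriv ψ r) (by fun_prop)
    (hq_supp.mono fun r hr hq0 => hr (by simp [hq0]))
  have hcross : ∫ r in Ioi (0 : ℝ), r ^ n * ((n - 1) * q r ^ 2 + 2 * q r * deriv ψ r) = 0 :=
    integral_Ioi_pow_mul_dslope_zero n hψ hψ_supp hψ_zero
  calc ((n - 1 : ℝ) / 2) ^ 2 * ∫ r in Ioi (0 : ℝ), r ^ n * (ψ r ^ 2 / r ^ 2)
      = ∫ r in Ioi (0 : ℝ), r ^ n * (((n - 1 : ℝ) / 2) ^ 2 * q r ^ 2) := by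
        rw [← integral_const_mul]
        refine setIntegral_congr_fun measurableSet_Ioi fun r hr => ?_
        simp only [q, dslope_zero_of_ne hψ_zero (ne_of_gt hr), div_pow]
        ring
    _ ≤ ∫ r in Ioi (0 : ℝ), (r ^ n * deriv ψ r ^ 2 +
          (n - 1) / 2 * (r ^ n * ((n - 1) * q r ^ 2 + 2 * q r * deriv ψ r))) := by
        refine setIntegral_mono_on hq_int (hψ'_int.add (hcross_int.const_mul _))
          measurableSet_Ioi fun r hr => ?_
        have := mul_nonneg (pow_nonneg (le_of_lt hr) n)
          (sq_nonneg (deriv ψ r + (n - 1) / 2 * q r))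
        linarith
    _ = ∫ r in Ioi (0 : ℝ), r ^ n * deriv ψ r ^ 2 := by
        rw [integral_add hψ'_int (hcross_int.const_mul _), integral_const_mul, hcross, mul_zero,
          add_zero]

end HalfLine

section Hardy

section Radial

variable {E : Type*} [NormedAddCommGroup E] [NormedSpace ℝ E] {u : E → ℝ}

theorem radialDeriv_smul_of_norm_eq_one {ω : E} (hω : ‖ω‖ = 1) {r : ℝ} (hr : 0 < r) :
    radialDeriv u (r • ω) = fderiv ℝ u (r • ω) ω := by
  rw [radialDeriv, norm_smul, hω, mul_one, norm_of_nonneg hr.le, inv_smul_smul₀ hr.ne']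

theorem tangentialNormSq_comp_smul (r : ℝ) {ω : E} (hω : ‖ω‖ = 1) (hr : 0 < r) :
    tangentialNormSq (fun y => u (r • y)) ω = r ^ 2 * tangentialNormSq u (r • ω) := by
  rw [tangentialNormSq, tangentialNormSq, radialDeriv_smul_of_norm_eq_one hω hr, radialDeriv,
    fderiv_comp_smul, hω, inv_one, one_smul, norm_smul, _root_.smul_apply,
    smul_eq_mul, mul_pow, mul_pow, norm_eq_abs, sq_abs, mul_sub]

variable [MeasurableSpace E] [BorelSpace E] (μ : Measure E)

section Integrability

variable [IsFiniteMeasureOnCompacts μ]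

theorem integrable_sq_div_norm_sq (hu : ContDiff ℝ 1 u) (hsupp : HasCompactSupport u)
    (hu_zero : u 0 = 0) : Integrable (fun x => u x ^ 2 / ‖x‖ ^ 2) μ := by
  obtain ⟨K, hK⟩ := hu.lipschitzWith_of_hasCompactSupport hsupp one_ne_zero
  have hbound (x : E) : u x ^ 2 / ‖x‖ ^ 2 ≤ (K : ℝ) ^ 2 := by
    refine div_le_of_le_mul₀ (sq_nonneg _) (sq_nonneg _) ?_
    rw [← mul_pow, sq_le_sq, abs_of_nonneg (by positivity : 0 ≤ (K : ℝ) * ‖x‖)]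
    simpa [hu_zero] using hK.norm_sub_le x 0
  refine (integrableOn_iff_integrable_of_support_subset fun x hx => ?_).1
    (Measure.integrableOn_of_bounded (s := tsupport u) (M := (K : ℝ) ^ 2)
      hsupp.isCompact.measure_lt_top.ne ?_ (ae_of_all _ fun x => ?_))
  · exact subset_tsupport u fun h => hx (by simp [h])
  · exact ((hu.continuous.measurable.pow_const 2).div
      (measurable_norm.pow_const 2)).aestronglyMeasurable
  · rw [norm_of_nonneg (by positivity)]
    exact hbound x

theorem integrable_norm_fderiv_sq (hu : ContDiff ℝ 1 u) (hsupp : HasCompactSupport u) :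
    Integrable (fun x => ‖fderiv ℝ u x‖ ^ 2) μ :=
  ((hu.continuous_fderiv one_ne_zero).norm.pow 2).integrable_of_hasCompactSupport
    ((hsupp.fderiv ℝ).mono fun x hx h => hx (by simp [h]))

theorem integrable_radialDeriv_sq [NullSingletonClass μ] (hu : ContDiff ℝ 1 u)
    (hsupp : HasCompactSupport u) : Integrable (fun x => radialDeriv u x ^ 2) μ := by
  refine (integrable_norm_fderiv_sq μ hu hsupp).mono' ?_ (ae_of_all _ fun x => ?_)
  · rw [← restrict_compl_singleton (μ := μ) (0 : E)]
    exact ((continuousOn_radialDeriv hu).pow 2).aestronglyMeasurable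
      (measurableSet_singleton 0).compl
  · rw [norm_of_nonneg (sq_nonneg _), ← sq_abs]
    gcongr
    exact abs_radialDeriv_le u x

end Integrability

theorem mul_integral_sq_div_norm_sq_le_integral_radialDeriv_sq [FiniteDimensional ℝ E]
    [Nontrivial E] [μ.IsAddHaarMeasure] (hu : ContDiff ℝ 1 u) (hsupp : HasCompactSupport u)
    (hu_zero : u 0 = 0) :
    (((finrank ℝ E : ℝ) - 2) / 2) ^ 2 * ∫ x, u x ^ 2 / ‖x‖ ^ 2 ∂μ ≤
      ∫ x, radialDeriv u x ^ 2 ∂μ := by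
  rw [← integral_const_mul]
  refine integral_le_integral_of_forall_ray μ
    ((integrable_sq_div_norm_sq μ hu hsupp hu_zero).const_mul _)
    (integrable_radialDeriv_sq μ hu hsupp) fun ω => ?_
  have hω : ‖(ω : E)‖ = 1 := norm_eq_of_mem_sphere ω
  have hray := integral_Ioi_pow_mul_sq_div_sq_le (ψ := fun r => u (r • (ω : E)))
    (finrank ℝ E - 1) (hu.comp (contDiff_id.smul contDiff_const))
    (hsupp.comp_isClosedEmbedding (isClosedEmbedding_smul_left (ne_zero_of_mem_unit_sphere ω)))
    (by simpa using hu_zero)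
  have hcoeff : ((finrank ℝ E - 1 : ℕ) : ℝ) - 1 = finrank ℝ E - 2 := by
    rw [Nat.cast_pred finrank_pos]
    ring
  rw [hcoeff, ← integral_const_mul] at hray
  convert hray using 1
  · refine setIntegral_congr_fun measurableSet_Ioi fun r _ => ?_
    simp only [norm_smul, hω, mul_one, norm_eq_abs, sq_abs]
    ring
  · refine setIntegral_congr_fun measurableSet_Ioi fun r hr => ?_
    have hderiv : HasDerivAt (fun r : ℝ => u (r • (ω : E))) (fderiv ℝ u (r • (ω : E)) ω) r := by
      simpa [Function.comp_def] using
        (hu.differentiable one_ne_zero (r • (ω : E))).hasFDerivAt.comp_hasDerivAt r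
          ((hasDerivAt_id r).smul_const (ω : E))
    simp only [hderiv.deriv, radialDeriv_smul_of_norm_eq_one hω hr]

end Radial

variable {E : Type*} [NormedAddCommGroup E] [InnerProductSpace ℝ E] [FiniteDimensional ℝ E]
  [MeasurableSpace E] [BorelSpace E] {u : E → ℝ}

theorem mul_integral_sq_div_norm_sq_le_integral_tangentialNormSq [Nontrivial E]
    (hu : ContDiff ℝ 1 u) (hsupp : HasCompactSupport u) (hu_zero : u 0 = 0)
    (havg : ∀ r : ℝ, 0 < r →
      ∫ ω : sphere (0 : E) 1, u (r • (ω : E)) ∂(volume : Measure E).toSphere = 0) :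
    ((finrank ℝ E : ℝ) - 1) * ∫ x, u x ^ 2 / ‖x‖ ^ 2 ≤ ∫ x, tangentialNormSq u x := by
  rw [← integral_const_mul]
  refine integral_le_integral_of_forall_sphere volume
    ((integrable_sq_div_norm_sq volume hu hsupp hu_zero).const_mul _)
    ((integrable_norm_fderiv_sq volume hu hsupp).sub (integrable_radialDeriv_sq volume hu hsupp))
    fun r hr => ?_
  have hpoincare := sphere_poincare (φ := fun y => u (r • y))
    (hu.comp (contDiff_const_smul r)) (havg r hr)
  have htan (ω : sphere (0 : E) 1) : tangentialNormSq (fun y => u (r • y)) (ω : E) =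
      r ^ 2 * tangentialNormSq u (r • (ω : E)) :=
    tangentialNormSq_comp_smul r (norm_eq_of_mem_sphere ω) hr
  have hdiv (ω : sphere (0 : E) 1) : u (r • (ω : E)) ^ 2 / ‖r • (ω : E)‖ ^ 2 =
      (r ^ 2)⁻¹ * u (r • (ω : E)) ^ 2 := by
    rw [norm_smul, norm_eq_of_mem_sphere ω, mul_one, norm_eq_abs, sq_abs, div_eq_inv_mul]
  simp only [htan, integral_const_mul] at hpoincare
  simp only [hdiv, integral_const_mul, mul_left_comm _ (r ^ 2)⁻¹]
  exact (inv_mul_le_iff₀ (sq_pos_of_pos hr)).2 hpoincare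

theorem eq_zero_of_integral_toSphere_zero_smul_eq_zero [Nontrivial E]
    (h : ∫ ω : sphere (0 : E) 1, u ((0 : ℝ) • (ω : E)) ∂(volume : Measure E).toSphere = 0) :
    u 0 = 0 := by
  have : NeZero (volume : Measure E).toSphere := ⟨(volume : Measure E).toSphere_ne_zero⟩
  simp only [zero_smul, integral_const, smul_eq_mul] at h
  exact (mul_eq_zero.1 h).resolve_left measureReal_univ_ne_zero

theorem hardy_sphere_avg_zero_ball_general (hu : ContDiff ℝ 1 u) (hsupp : HasCompactSupport u)
    (havg : ∀ r : ℝ, 0 ≤ r →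
      ∫ ω : sphere (0 : E) 1, u (r • (ω : E)) ∂(volume : Measure E).toSphere = 0) :
    (finrank ℝ E : ℝ) ^ 2 / 4 * ∫ x, u x ^ 2 / ‖x‖ ^ 2 ≤ ∫ x, ‖fderiv ℝ u x‖ ^ 2 := by
  rcases subsingleton_or_nontrivial E with _ | _
  · simp [finrank_zero_of_subsingleton]
  have hu_zero := eq_zero_of_integral_toSphere_zero_smul_eq_zero (havg 0 le_rfl)
  have hradial :=
    mul_integral_sq_div_norm_sq_le_integral_radialDeriv_sq volume hu hsupp hu_zero
  have htangential := mul_integral_sq_div_norm_sq_le_integral_tangentialNormSq hu hsupp hu_zero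
    fun r hr => havg r hr.le
  simp only [tangentialNormSq] at htangential
  rw [integral_sub (integrable_norm_fderiv_sq volume hu hsupp)
    (integrable_radialDeriv_sq volume hu hsupp)] at htangential
  linarith

end Hardy

end Development

/-- Let `N ≥ 2`. For every smooth `u` compactly supported in
the unit ball `B₁ᴺ` with spherical average zero,
`(N²/4) ∫_{B₁ᴺ} |u|²/|x|² dx ≤ ∫_{B₁ᴺ} |∇u|² dx`. -/
theorem hardy_sphere_avg_zero_ball
    (N : ℕ) (hN : 2 ≤ N) (u : EuclideanSpace ℝ (Fin N) → ℝ)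
    (hu : ContDiff ℝ (⊤ : ℕ∞) u) (hsupp : HasCompactSupport u)
    (hball : tsupport u ⊆ ball (0 : EuclideanSpace ℝ (Fin N)) 1)
    (havg : SphereAvgZero u) :
    ((N : ℝ) ^ 2 / 4) *
        (∫ x in ball (0 : EuclideanSpace ℝ (Fin N)) 1, (u x) ^ 2 / ‖x‖ ^ 2) ≤
      ∫ x in ball (0 : EuclideanSpace ℝ (Fin N)) 1, ‖fderiv ℝ u x‖ ^ 2 := by
  have hu_off (x) (hx : x ∉ ball (0 : EuclideanSpace ℝ (Fin N)) 1) : u x = 0 :=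
    image_eq_zero_of_notMem_tsupport fun h => hx (hball h)
  have hfderiv_off (x) (hx : x ∉ ball (0 : EuclideanSpace ℝ (Fin N)) 1) : fderiv ℝ u x = 0 :=
    fderiv_of_notMem_tsupport ℝ fun h => hx (hball h)
  rw [setIntegral_eq_integral_of_forall_compl_eq_zero fun x hx => by simp [hu_off x hx],
    setIntegral_eq_integral_of_forall_compl_eq_zero fun x hx => by simp [hfderiv_off x hx]]
  simpa using hardy_sphere_avg_zero_ball_general (hu.of_le (by exact_mod_cast le_top)) hsupp havg

end
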